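/- Define φ¹, φ² : ℝ → ℝ by φ¹(x) = 2x² + 3x + 1 for −1 ≤ x < 0, φ¹(x) = 2x² − 3x + 1 for 0 ≤ x ≤ 1, φ¹(x) = 0 otherwise; and φ²(x) = −4x² + 4x for 0 ≤ x ≤ 1, φ²(x) = 0 otherwise. Define the left boundary refinable functions φ^L(x) := φ¹(x) for x ≥ 0, φ^L(x) := 0 for x < 0, and φ^{L,bc}(x) := φ²(x) for x ≥ 0, φ^{L,bc}(x) := 0 for x < 0. Then for every x ∈ ℝ: φ^L(x) = φ^L(2x) + (3/8) φ²(2x) − (1/8) φ²(2x−1), and φ^{L,bc}(x) = (3/4) φ^{L,bc}(2x) + φ¹(2x−1) + (3/4) φ²(2x−1). -/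

import Mathlib

/-!
The breakpoints of all functions involved are `0`, `1/2` and `1`. On each of the intervals
`(-∞, 0)`, `[0, 1/2)`, `[1/2, 1]` and `(1, ∞)` every term is a single quadratic polynomial, and both
refinement relations become polynomial identities. The lemmas below give the pieces of `phi1` and
`phi2`, with closed endpoints wherever the function vanishes there continuously.
-/

noncomputable section

/-- First component of the piecewise-quadratic refinable vector function, supported on `[-1,1]`. -/
def phi1 (x : ℝ) : ℝ :=
  if -1 ≤ x ∧ x < 0 then 2*x^2 + 3*x + 1
  else if 0 ≤ x ∧ x ≤ 1 then 2*x^2 - 3*x + 1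
  else 0

/-- Second component of the piecewise-quadratic refinable vector function, supported on `[0,1]`. -/
def phi2 (x : ℝ) : ℝ :=
  if 0 ≤ x ∧ x ≤ 1 then -4*x^2 + 4*x else 0

/-- Left boundary refinable function `φ^L = φ¹ χ_{[0,∞)}`. -/
def phiL (x : ℝ) : ℝ := if 0 ≤ x then phi1 x else 0

/-- Left boundary refinable function `φ^{L,bc} = φ² χ_{[0,∞)}`. -/
def phiLbc (x : ℝ) : ℝ := if 0 ≤ x then phi2 x else 0

theorem phi1_of_neg {x : ℝ} (h : -1 ≤ x) (hx : x < 0) : phi1 x = 2*x^2 + 3*x + 1 :=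
  if_pos ⟨h, hx⟩

theorem phi1_of_nonneg {x : ℝ} (h : 0 ≤ x) (hx : x ≤ 1) : phi1 x = 2*x^2 - 3*x + 1 := by
  rw [phi1, if_neg (fun H => absurd H.2 (not_lt.2 h)), if_pos ⟨h, hx⟩]

theorem phi1_of_lt {x : ℝ} (h : x < -1) : phi1 x = 0 := by
  rw [phi1, if_neg (fun H => by linarith [H.1]), if_neg (fun H => by linarith [H.1])]

/-- The value at `1` is `0` too, so the support bound may be taken non-strictly. -/
theorem phi1_of_ge {x : ℝ} (h : 1 ≤ x) : phi1 x = 0 := by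
  rcases h.eq_or_lt with rfl | h
  · norm_num [phi1]
  · rw [phi1, if_neg (fun H => by linarith [H.2]), if_neg (fun H => by linarith [H.2])]

theorem phi2_of_mem {x : ℝ} (h : 0 ≤ x) (hx : x ≤ 1) : phi2 x = -4*x^2 + 4*x :=
  if_pos ⟨h, hx⟩

/-- `phi2` is continuous at `0`, so the endpoint is included. -/
theorem phi2_of_le {x : ℝ} (h : x ≤ 0) : phi2 x = 0 := by
  rcases h.eq_or_lt with rfl | h
  · norm_num [phi2]
  · exact if_neg (fun H => by linarith [H.1])

/-- `phi2` is continuous at `1`, so the endpoint is included. -/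
theorem phi2_of_ge {x : ℝ} (h : 1 ≤ x) : phi2 x = 0 := by
  rcases h.eq_or_lt with rfl | h
  · norm_num [phi2]
  · exact if_neg (fun H => by linarith [H.2])

/-- Truncation does not change `phi2`, whose support already lies in `[0, ∞)`. -/
theorem phiLbc_eq (x : ℝ) : phiLbc x = phi2 x := by
  rw [phiLbc]
  split_ifs with h
  · rfl
  · exact (phi2_of_le (not_le.1 h).le).symm

theorem phiL_of_neg {x : ℝ} (h : x < 0) : phiL x = 0 :=
  if_neg (not_le.2 h)

theorem phiL_of_nonneg {x : ℝ} (h : 0 ≤ x) : phiL x = phi1 x :=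
  if_pos h

theorem quadratic_multiwavelet_boundary_refinement :
    ∀ x : ℝ,
      phiL x = phiL (2*x) + (3/8) * phi2 (2*x) - (1/8) * phi2 (2*x - 1) ∧
      phiLbc x = (3/4) * phiLbc (2*x) + phi1 (2*x - 1) + (3/4) * phi2 (2*x - 1) := by
  intro x
  rw [phiLbc_eq, phiLbc_eq]
  rcases lt_or_ge x 0 with h0 | h0
  · rw [phiL_of_neg h0, phiL_of_neg (by linarith), phi2_of_le h0.le, phi2_of_le (by linarith),
      phi2_of_le (by linarith), phi1_of_lt (by linarith)]
    norm_num
  rw [phiL_of_nonneg h0, phiL_of_nonneg (by linarith)]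
  rcases lt_or_ge x (1/2) with h1 | h1
  · rw [phi1_of_nonneg h0 (by linarith), phi1_of_nonneg (x := 2*x) (by linarith) (by linarith),
      phi2_of_mem h0 (by linarith), phi2_of_mem (x := 2*x) (by linarith) (by linarith),
      phi2_of_le (by linarith), phi1_of_neg (by linarith) (by linarith)]
    constructor <;> ring
  rw [phi1_of_ge (x := 2*x) (by linarith), phi2_of_ge (x := 2*x) (by linarith)]
  rcases le_or_gt x 1 with h2 | h2
  · rw [phi1_of_nonneg h0 h2, phi2_of_mem h0 h2,
      phi1_of_nonneg (x := 2*x - 1) (by linarith) (by linarith),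
      phi2_of_mem (x := 2*x - 1) (by linarith) (by linarith)]
    constructor <;> ring
  · rw [phi1_of_ge h2.le, phi2_of_ge h2.le, phi1_of_ge (by linarith), phi2_of_ge (by linarith)]
    norm_num
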